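/- For a ≥ 1 and |x| < 1 (or as formal power series), (1/a) Σ_{d|a} φ(d)·(1-x^d)^{-a/d} = Σ_{b≥0} N_{a,b} x^b, where N_{a,b} is the number of binary necklaces with a black and b red beads. -/

import Mathlib

open Finset

/-- The rotation relation on colourings of `Fin (a + b)` by `Bool`
(`true` = black, `false` = red) with exactly `a` black beads. -/
def necklaceRel (a b : ℕ)
    (f g : {f : Fin (a + b) → Bool // (Finset.univ.filter fun i => f i = true).card = a}) :
    Prop :=
  ∃ r : Fin (a + b), ∀ i, g.1 i = f.1 (i + r)

/-- The number of necklaces with `a` black and `b` red beads. -/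
noncomputable def necklaceNum (a b : ℕ) : ℕ :=
  Nat.card (Quot (necklaceRel a b))

/-- The preimage in `G` of a subset of `G ⧸ H` has `|H|` times as many points. -/
theorem card_filter_comp_mk {G : Type*} [AddCommGroup G] [Fintype G] (H : AddSubgroup G)
    (h : G ⧸ H → Bool) [Fintype (G ⧸ H)] :
    (univ.filter fun i : G => h (QuotientAddGroup.mk i) = true).card =
      Nat.card H * (univ.filter fun q => h q = true).card := by
  classical
  have e := Nat.card_congr
    (QuotientAddGroup.preimageMkEquivAddSubgroupProdSet H {q | h q = true})
  rw [Nat.card_prod] at e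
  rw [← Fintype.card_subtype, ← Fintype.card_subtype, ← Nat.card_eq_fintype_card,
    ← Nat.card_eq_fintype_card]
  exact e

theorem card_bool_fun_card_true (Q : Type*) [Fintype Q] (k : ℕ) :
    Nat.card {h : Q → Bool // (univ.filter fun q => h q = true).card = k} =
      (Fintype.card Q).choose k := by
  classical
  rw [← Fintype.card_finset_len, Nat.card_eq_fintype_card]
  refine Fintype.card_congr
    { toFun := fun h => ⟨univ.filter fun q => h.1 q = true, h.2⟩
      invFun := fun s => ⟨fun q => decide (q ∈ s.1), by simpa using s.2⟩
      left_inv := fun h => by ext; simp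
      right_inv := fun s => by ext; simp }

/-- The number of colourings with `a` black points that are invariant under translation by `r`. -/
theorem card_colorings_fixed_by {G : Type*} [AddCommGroup G] [Fintype G] (a : ℕ) (r : G) :
    Nat.card {f : {f : G → Bool // (univ.filter fun i => f i = true).card = a} //
        ∀ i, f.1 (i + r) = f.1 i} =
      if addOrderOf r ∣ a then (Fintype.card G / addOrderOf r).choose (a / addOrderOf r)
      else 0 := by
  classical
  set H := AddSubgroup.zmultiples r with hH
  have hcard : Nat.card H = addOrderOf r := Nat.card_zmultiples r
  have hpos : 0 < addOrderOf r := addOrderOf_pos r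
  have hlift : ∀ f : G → Bool, (∀ i, f (i + r) = f i) →
      ∀ x y : G, QuotientAddGroup.leftRel H x y → f x = f y := by
    intro f hf x y hxy
    rw [QuotientAddGroup.leftRel_apply] at hxy
    obtain ⟨k, hk⟩ := mem_multiples_iff_mem_zmultiples.2 hxy
    have hy : y = x + k • r := by
      rw [show k • r = -x + y from hk, add_neg_cancel_left]
    have hk : ∀ k : ℕ, f (x + k • r) = f x := by
      intro k
      induction k with
      | zero => simp
      | succ k ih => rw [succ_nsmul, ← add_assoc, hf, ih]
    rw [hy, hk]
  have e : {f : {f : G → Bool // (univ.filter fun i => f i = true).card = a} //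
        ∀ i, f.1 (i + r) = f.1 i} ≃
      {h : G ⧸ H → Bool // addOrderOf r * (univ.filter fun q => h q = true).card = a} :=
    { toFun := fun f => ⟨fun q => Quotient.lift f.1.1 (hlift f.1.1 f.2) q, by
        have := card_filter_comp_mk H (fun q => Quotient.lift f.1.1 (hlift f.1.1 f.2) q)
        rw [← hcard, ← this]
        exact f.1.2⟩
      invFun := fun h => ⟨⟨fun i => h.1 (QuotientAddGroup.mk i), by
        rw [card_filter_comp_mk H h.1, hcard]; exact h.2⟩, fun i => by
          refine congrArg h.1 ?_
          rw [QuotientAddGroup.eq]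
          simp [hH]⟩
      left_inv := fun f => rfl
      right_inv := fun h => by
        ext q
        induction q using QuotientAddGroup.induction_on
        rfl }
  rw [Nat.card_congr e]
  have hQ : Fintype.card (G ⧸ H) = Fintype.card G / addOrderOf r := by
    have := AddSubgroup.card_eq_card_quotient_mul_card_addSubgroup H
    rw [hcard, Nat.card_eq_fintype_card, Nat.card_eq_fintype_card] at this
    rw [this, Nat.mul_div_cancel _ hpos]
  split_ifs with hd
  · rw [← hQ, ← card_bool_fun_card_true]
    obtain ⟨k, rfl⟩ := hd
    simp only [Nat.mul_div_cancel_left _ hpos, Nat.mul_right_inj hpos.ne']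
  · rw [Nat.card_eq_zero]
    exact Or.inl ⟨fun h => hd ⟨_, h.2.symm⟩⟩

/-- Burnside's count of the translation classes of colourings of a finite cyclic group. -/
theorem card_quot_translation_mul_card {G : Type*} [AddCommGroup G] [Fintype G] [IsAddCyclic G]
    (a : ℕ) :
    Nat.card (Quot fun f g : {f : G → Bool // (univ.filter fun i => f i = true).card = a} =>
        ∃ r : G, ∀ i, g.1 i = f.1 (i + r)) * Fintype.card G =
      ∑ d ∈ (Fintype.card G).divisors, d.totient *
        if d ∣ a then (Fintype.card G / d).choose (a / d) else 0 := by
  classical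
  let X := {f : G → Bool // (univ.filter fun i => f i = true).card = a}
  let _ : AddAction G X :=
    { vadd := fun r f => ⟨fun i => f.1 (i + r), by
        refine Eq.trans ?_ f.2
        exact Finset.card_equiv (Equiv.addRight r) (by simp)⟩
      zero_vadd := fun f => Subtype.ext (funext fun i => congrArg f.1 (add_zero i))
      add_vadd := fun r s f => Subtype.ext (funext fun i =>
        congrArg f.1 (by rw [add_assoc, add_comm r s])) }
  have hB := AddAction.sum_card_fixedBy_eq_card_orbits_mul_card_addGroup G X
  have hquot : Nat.card (Quot fun f g : X => ∃ r : G, ∀ i, g.1 i = f.1 (i + r)) =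
      Fintype.card (Quotient (AddAction.orbitRel G X)) := by
    rw [← Nat.card_eq_fintype_card]
    refine Nat.card_congr (Quot.congrRight fun f g => ?_)
    rw [← Quotient.eq, eq_comm, Quotient.eq, AddAction.orbitRel_apply, AddAction.mem_orbit_iff]
    refine exists_congr fun r => ?_
    rw [Subtype.ext_iff, funext_iff]
    exact forall_congr' fun i => eq_comm
  have hfix : ∀ r : G, Fintype.card (AddAction.fixedBy X r) =
      if addOrderOf r ∣ a then (Fintype.card G / addOrderOf r).choose (a / addOrderOf r)
      else 0 := by
    intro r
    rw [← card_colorings_fixed_by, ← Nat.card_eq_fintype_card]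
    refine Nat.card_congr (Equiv.subtypeEquivRight fun f => ?_)
    rw [AddAction.mem_fixedBy, Subtype.ext_iff, funext_iff]
    rfl
  rw [hquot, ← hB, Finset.sum_congr rfl fun r _ => hfix r,
    ← Finset.sum_fiberwise_of_maps_to (g := fun r : G => addOrderOf r)
      (t := (Fintype.card G).divisors)
      (fun r _ => Nat.mem_divisors.2 ⟨addOrderOf_dvd_card, Fintype.card_ne_zero⟩)]
  refine Finset.sum_congr rfl fun d hd => ?_
  rw [← IsAddCyclic.card_addOrderOf_eq_totient (α := G)
    (by simpa using Nat.dvd_of_mem_divisors hd), ← smul_eq_mul, ← Finset.sum_const]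
  refine Finset.sum_congr rfl fun r hr => ?_
  rw [(Finset.mem_filter.1 hr).2]

theorem isAddCyclic_fin (n : ℕ) : IsAddCyclic (Fin (n + 1)) :=
  inferInstanceAs (IsAddCyclic (ZMod (n + 1)))

theorem necklaceNum_mul (a b : ℕ) (ha : 1 ≤ a) :
    necklaceNum a b * (a + b) =
      ∑ d ∈ (a + b).divisors, d.totient *
        if d ∣ a then ((a + b) / d).choose (a / d) else 0 := by
  have key : ∀ n : ℕ, n ≠ 0 →
      Nat.card (Quot fun f g : {f : Fin n → Bool // (univ.filter fun i => f i = true).card = a} =>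
        ∃ r : Fin n, ∀ i, g.1 i = f.1 (i + r)) * n =
      ∑ d ∈ n.divisors, d.totient * if d ∣ a then (n / d).choose (a / d) else 0 := by
    rintro (_ | n) hn
    · exact absurd rfl hn
    · have := isAddCyclic_fin n
      have := card_quot_translation_mul_card (G := Fin (n + 1)) a
      rwa [Fintype.card_fin] at this
  exact key (a + b) (by omega)

/-- The number of necklaces as a sum over `d ∣ a` of multiples of the coefficients of `x ^ b` in
`(1 - x ^ d)⁻¹ ^ (a / d)`. -/
theorem necklaceNum_eq_sum_divisors (a b : ℕ) (ha : 1 ≤ a) :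
    (necklaceNum a b : ℝ) = (1 / (a : ℝ)) * ∑ d ∈ a.divisors, (d.totient : ℝ) *
      if d ∣ b then ((b / d + (a / d - 1)).choose (a / d - 1) : ℝ) else 0 := by
  have hn : ((a + b : ℕ) : ℝ) ≠ 0 := by positivity
  have h := congrArg (Nat.cast : ℕ → ℝ) (necklaceNum_mul a b ha)
  rw [Nat.cast_mul] at h
  refine (mul_right_cancel₀ hn ?_).symm
  rw [h]
  have hg : (a.gcd b).divisors ⊆ a.divisors :=
    Nat.divisors_subset_of_dvd (by omega) (Nat.gcd_dvd_left a b)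
  have hg' : (a.gcd b).divisors ⊆ (a + b).divisors :=
    Nat.divisors_subset_of_dvd (by omega) ((Nat.gcd_dvd_left a b).add (Nat.gcd_dvd_right a b))
  have hg0 : a.gcd b ≠ 0 := (Nat.gcd_pos_of_pos_left _ ha).ne'
  rw [Nat.cast_sum, ← Finset.sum_subset hg, ← Finset.sum_subset hg', Finset.mul_sum,
    Finset.sum_mul]
  · refine Finset.sum_congr rfl fun d hd => ?_
    have hd0 : 0 < d := Nat.pos_of_mem_divisors hd
    have hdg := Nat.dvd_of_mem_divisors hd
    obtain ⟨k, rfl⟩ := hdg.trans (Nat.gcd_dvd_left a b)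
    obtain ⟨r, rfl⟩ := hdg.trans (Nat.gcd_dvd_right _ b)
    obtain ⟨k, rfl⟩ : ∃ l, k = l + 1 := Nat.exists_eq_succ_of_ne_zero (by rintro rfl; simp at ha)
    rw [if_pos (dvd_mul_right _ _), if_pos (dvd_mul_right _ _), ← mul_add,
      Nat.mul_div_cancel_left _ hd0, Nat.mul_div_cancel_left _ hd0, Nat.mul_div_cancel_left _ hd0]
    have hc := congrArg (Nat.cast : ℕ → ℝ) (Nat.add_one_mul_choose_eq (r + k) k)
    rw [show k + 1 + r = r + k + 1 by ring, Nat.add_sub_cancel]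
    push_cast at hc ⊢
    have hd1 : (d : ℝ) ≠ 0 := by positivity
    field_simp
    linear_combination hc
  · intro d hd hdg
    have hda : ¬ d ∣ a := fun h => hdg <| Nat.mem_divisors.2
      ⟨Nat.dvd_gcd h ((Nat.dvd_add_right h).1 (Nat.dvd_of_mem_divisors hd)), hg0⟩
    simp [hda]
  · intro d hd hdg
    have hdb : ¬ d ∣ b := fun h => hdg <| Nat.mem_divisors.2
      ⟨Nat.dvd_gcd (Nat.dvd_of_mem_divisors hd) h, hg0⟩
    simp [hdb]

theorem hasSum_inv_one_sub_pow_pow (d k : ℕ) (hd : d ≠ 0) (x : ℝ) (hx : |x| < 1) :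
    HasSum (fun b : ℕ => (if d ∣ b then ((b / d + k).choose k : ℝ) else 0) * x ^ b)
      (((1 - x ^ d)⁻¹) ^ (k + 1)) := by
  have hy : ‖x ^ d‖ < 1 := by
    rw [norm_pow, Real.norm_eq_abs]
    exact pow_lt_one₀ (abs_nonneg x) hx hd
  have h := hasSum_choose_mul_geometric_of_norm_lt_one k hy
  rw [one_div, ← inv_pow] at h
  rw [← (mul_right_injective₀ hd).hasSum_iff]
  · refine (congrArg (HasSum · _) (funext fun r => ?_)).mpr h
    simp [Nat.mul_div_cancel_left _ (Nat.pos_of_ne_zero hd), pow_mul]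
  · intro b hb
    rw [if_neg, zero_mul]
    rintro ⟨r, rfl⟩
    exact hb ⟨r, rfl⟩

theorem necklace_generating_function (a : ℕ) (ha : 1 ≤ a) (x : ℝ) (hx : |x| < 1) :
    (1 / (a : ℝ)) * ∑ d ∈ a.divisors, (Nat.totient d : ℝ) * ((1 - x ^ d)⁻¹) ^ (a / d) =
      ∑' b : ℕ, (necklaceNum a b : ℝ) * x ^ b := by
  have hterm : ∀ d ∈ a.divisors, HasSum
      (fun b : ℕ => (d.totient : ℝ) *
        ((if d ∣ b then ((b / d + (a / d - 1)).choose (a / d - 1) : ℝ) else 0) * x ^ b))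
      ((d.totient : ℝ) * ((1 - x ^ d)⁻¹) ^ (a / d)) := by
    intro d hd
    have hk : a / d - 1 + 1 = a / d :=
      Nat.sub_add_cancel (Nat.div_pos (Nat.divisor_le hd) (Nat.pos_of_mem_divisors hd))
    have h := hasSum_inv_one_sub_pow_pow d (a / d - 1) (Nat.pos_of_mem_divisors hd).ne' x hx
    rw [hk] at h
    exact h.mul_left _
  rw [← ((hasSum_sum hterm).mul_left (1 / (a : ℝ))).tsum_eq]
  refine tsum_congr fun b => ?_
  rw [necklaceNum_eq_sum_divisors a b ha, mul_assoc, Finset.sum_mul]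
  simp only [mul_assoc]
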